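/- Let Ω ⊂ ℝⁿ be a bounded open set with Lipschitz boundary, Y^m = (0,1)^m with m > n, and let R be an m×n real matrix satisfying R^T k ≠ 0 for all nonzero k ∈ ℤ^m. If (u_η) is a bounded sequence in L^p(Ω), 1 < p < ∞, then there exist a vanishing subsequence η_k and a function u₀ ∈ L^p(Ω × Y^m) (Y^m-periodic in y) such that for every test function φ ∈ L^q(Ω; C_♯(Y^m)) (with 1/p + 1/q = 1), ∫_Ω u_{η_k}(x) φ(x, R x / η_k) dx → ∫_Ω ∫_{Y^m} u₀(x,y) φ(x,y) dx dy. -/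

import Mathlib

open MeasureTheory Filter Topology Matrix

noncomputable section

/-- The open unit cube `Y^m = (0,1)^m`. -/
def cube (m : ℕ) : Set (Fin m → ℝ) := Set.univ.pi fun _ => Set.Ioo (0:ℝ) 1

/-- `Y^m`-periodicity: invariance under integer translations. -/
def Zper {m : ℕ} {α : Type*} (g : (Fin m → ℝ) → α) : Prop :=
  ∀ (k : Fin m → ℤ) (y : Fin m → ℝ), g (y + fun i => (k i : ℝ)) = g y

/-- Cut-and-projection irrationality condition: `Rᵀ k ≠ 0` for nonzero integer `k`. -/
def Irr {m n : ℕ} (R : Matrix (Fin m) (Fin n) ℝ) : Prop :=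
  ∀ k : Fin m → ℤ, k ≠ 0 → R.transpose.mulVec (fun i => (k i : ℝ)) ≠ 0

/-- Admissible test functions: `φ ∈ L^q(Ω; C_♯(Y^m))`. -/
def TestFun {n m : ℕ} (q : ℝ) (Ω : Set (Fin n → ℝ))
    (φ : (Fin n → ℝ) → (Fin m → ℝ) → ℝ) : Prop :=
  (∀ x, Continuous (φ x)) ∧ (∀ x, Zper (φ x)) ∧
  (∀ y, AEMeasurable (fun x => φ x y) (volume.restrict Ω)) ∧
  Integrable (fun x => (⨆ y, |φ x y|) ^ q) (volume.restrict Ω)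

/-- Weak two-scale cut-and-projection convergence along a sequence of scales `η`. -/
def WeakTwoScale {n m : ℕ} (q : ℝ) (Ω : Set (Fin n → ℝ)) (R : Matrix (Fin m) (Fin n) ℝ)
    (η : ℕ → ℝ) (u : ℕ → (Fin n → ℝ) → ℝ)
    (u₀ : (Fin n → ℝ) → (Fin m → ℝ) → ℝ) : Prop :=
  ∀ φ : (Fin n → ℝ) → (Fin m → ℝ) → ℝ, TestFun q Ω φ →
    Tendsto (fun k => ∫ x in Ω, u k x * φ x ((η k)⁻¹ • R.mulVec x)) atTop
      (𝓝 (∫ x in Ω, ∫ y in cube m, u₀ x y * φ x y))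

/-- Classical gradient on `ℝ^m`. -/
def gradY {m : ℕ} (θ : (Fin m → ℝ) → ℝ) (y : Fin m → ℝ) : Fin m → ℝ :=
  fun j => fderiv ℝ θ y (Pi.single j 1)

/-- The projected gradient `grad_R θ = Rᵀ ∇_y θ`. -/
def gradR {m n : ℕ} (R : Matrix (Fin m) (Fin n) ℝ) (θ : (Fin m → ℝ) → ℝ)
    (y : Fin m → ℝ) : Fin n → ℝ :=
  R.transpose.mulVec (gradY θ y)

/-- The projected divergence `div_R φ = (Rᵀ ∇_y) · φ`. -/
def divR {m n : ℕ} (R : Matrix (Fin m) (Fin n) ℝ) (φ : (Fin m → ℝ) → Fin n → ℝ)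
    (y : Fin m → ℝ) : ℝ :=
  ∑ i, gradR R (fun z => φ z i) y i

/-- `G` is the weak periodic cut-and-projection gradient `grad_R θ`. -/
def IsWeakGradR {m n : ℕ} (R : Matrix (Fin m) (Fin n) ℝ) (θ : (Fin m → ℝ) → ℝ)
    (G : (Fin m → ℝ) → Fin n → ℝ) : Prop :=
  ∀ ψ : (Fin m → ℝ) → Fin n → ℝ, ContDiff ℝ (⊤ : ℕ∞) ψ → (∀ i, Zper fun y => ψ y i) →
    ∫ y in cube m, θ y * divR R ψ y = - ∫ y in cube m, G y ⬝ᵥ ψ y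

/-- `d` is the weak periodic cut-and-projection divergence `div_R φ`. -/
def IsWeakDivR {m n : ℕ} (R : Matrix (Fin m) (Fin n) ℝ) (φ : (Fin m → ℝ) → Fin n → ℝ)
    (d : (Fin m → ℝ) → ℝ) : Prop :=
  ∀ ψ : (Fin m → ℝ) → ℝ, ContDiff ℝ (⊤ : ℕ∞) ψ → Zper ψ →
    ∫ y in cube m, φ y ⬝ᵥ gradR R ψ y = - ∫ y in cube m, d y * ψ y

/-- `G` is the weak (full) periodic gradient `∇_y θ`. -/
def IsWeakGrad {m : ℕ} (θ : (Fin m → ℝ) → ℝ) (G : (Fin m → ℝ) → Fin m → ℝ) : Prop :=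
  ∀ ψ : (Fin m → ℝ) → ℝ, ContDiff ℝ (⊤ : ℕ∞) ψ → Zper ψ → ∀ j,
    ∫ y in cube m, θ y * gradY ψ y j = - ∫ y in cube m, G y j * ψ y

/-- `G` is the weak gradient of `u` on `Ω`. -/
def IsWeakGradOn {n : ℕ} (Ω : Set (Fin n → ℝ)) (u : (Fin n → ℝ) → ℝ)
    (G : (Fin n → ℝ) → Fin n → ℝ) : Prop :=
  ∀ ψ : (Fin n → ℝ) → ℝ, ContDiff ℝ (⊤ : ℕ∞) ψ → HasCompactSupport ψ → tsupport ψ ⊆ Ω → ∀ j,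
    ∫ x in Ω, u x * fderiv ℝ ψ x (Pi.single j 1) = - ∫ x in Ω, G x j * ψ x

/-- `d` is the weak divergence of `v` on `Ω`. -/
def IsWeakDivOn {n : ℕ} (Ω : Set (Fin n → ℝ)) (v : (Fin n → ℝ) → Fin n → ℝ)
    (d : (Fin n → ℝ) → ℝ) : Prop :=
  ∀ ψ : (Fin n → ℝ) → ℝ, ContDiff ℝ (⊤ : ℕ∞) ψ → HasCompactSupport ψ → tsupport ψ ⊆ Ω →
    ∫ x in Ω, v x ⬝ᵥ (fun j => fderiv ℝ ψ x (Pi.single j 1)) = - ∫ x in Ω, d x * ψ x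

/-- Membership in `W_0^{1,p}(Ω)` with weak gradient `G`. -/
def MemW1p0 {n : ℕ} (p : ℝ) (Ω : Set (Fin n → ℝ)) (u : (Fin n → ℝ) → ℝ)
    (G : (Fin n → ℝ) → Fin n → ℝ) : Prop :=
  Integrable (fun x => |u x| ^ p) (volume.restrict Ω) ∧
  Integrable (fun x => ‖G x‖ ^ p) (volume.restrict Ω) ∧
  IsWeakGradOn Ω u G ∧
  ∃ v : ℕ → (Fin n → ℝ) → ℝ,
    (∀ j, ContDiff ℝ (⊤ : ℕ∞) (v j) ∧ HasCompactSupport (v j) ∧ tsupport (v j) ⊆ Ω) ∧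
    Tendsto (fun j => (∫ x in Ω, |v j x - u x| ^ p) +
      ∫ x in Ω, ‖(fun i => fderiv ℝ (v j) x (Pi.single i 1)) - G x‖ ^ p) atTop (𝓝 0)

/-
Test the sequence against `L^q(Ω; C(T))`, where `T = ℝ^m / ℤ^m`: the functionals
`g ↦ ∫ u_η(x) g(x, Rx/η) dx` are bounded, so along a subsequence they converge weak-* to some `L`.
By Hölder, `L g` is bounded by the limit of the `L^q(Ω)` norms of `x ↦ g(x, Rx/η)`. The points
`Rx/η` equidistribute on `T`, uniformly over the measurable parts of `Ω`: by Weyl's criterion this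
is the decay of the Fourier transform of an indicator function at the frequencies `Rᵀk/η`, which
tend to infinity because `Rᵀk ≠ 0`. Hence those norms converge to the `L^q(Ω × T)` norm of `g`, so
`L` extends to `L^q(Ω × T)`, and Riesz duality represents it by a function `u₀ ∈ L^p(Ω × T)`.
-/

open scoped ENNReal NNReal

section FunctionalAnalysis

variable {E F : Type*} [NormedAddCommGroup E] [NormedSpace ℝ E]
  [NormedAddCommGroup F] [NormedSpace ℝ F]

lemma exists_strongDual_comp_eq (J : E →L[ℝ] F) (L : StrongDual ℝ E) (K : ℝ)
    (hL : ∀ x, ‖L x‖ ≤ K * ‖J x‖) : ∃ M : StrongDual ℝ F, ∀ x, M (J x) = L x := by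
  have hker : J.toLinearMap.ker ≤ L.toLinearMap.ker := fun x hx => by
    have hJx : J x = 0 := hx
    simpa [hJx] using hL x
  obtain ⟨M₀, hM₀⟩ : L.toLinearMap ∈ LinearMap.range J.toLinearMap.dualMap := by
    rw [LinearMap.range_dualMap_eq_dualAnnihilator_ker, Submodule.mem_dualAnnihilator]
    exact fun x hx => hker hx
  have hM₀J (x : E) : M₀ (J x) = L x := LinearMap.congr_fun hM₀ x
  have hbound (y : J.range) : ‖M₀.domRestrict J.range y‖ ≤ K * ‖y‖ := by
    obtain ⟨_, x, rfl⟩ := y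
    simpa [hM₀J] using hL x
  obtain ⟨M, hM, -⟩ := exists_extension_norm_eq J.range (LinearMap.mkContinuous _ K hbound)
  exact ⟨M, fun x => (hM ⟨J x, x, rfl⟩).trans (hM₀J x)⟩

lemma exists_subseq_tendsto_strongDual [TopologicalSpace.SeparableSpace E]
    (G : ℕ → StrongDual ℝ E) (K : ℝ) (hG : ∀ k, ‖G k‖ ≤ K) :
    ∃ θ : ℕ → ℕ, StrictMono θ ∧ ∃ L : StrongDual ℝ E,
      ∀ x, Tendsto (fun k => G (θ k) x) atTop (𝓝 (L x)) := by
  obtain ⟨L, -, θ, hθ, hL⟩ := WeakDual.isSeqCompact_closedBall ℝ E 0 K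
    (x := fun k => StrongDual.toWeakDual (G k)) fun k => by simpa using hG k
  exact ⟨θ, hθ, WeakDual.toStrongDual L,
    fun x => ((WeakDual.eval_continuous x).tendsto L).comp hL⟩

-- Along a weak-* limit the bounds `K * N k x` pass to `K * ‖J x‖`, which lets the limit functional
-- factor through `J`.
lemma exists_subseq_tendsto_strongDual_comp [TopologicalSpace.SeparableSpace E]
    (G : ℕ → StrongDual ℝ E) (J : E →L[ℝ] F) (N : ℕ → E → ℝ) (K : ℝ≥0)
    (hG : ∀ k x, ‖G k x‖ ≤ K * N k x) (hN : ∀ k x, N k x ≤ ‖x‖)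
    (hJ : ∀ x, Tendsto (fun k => N k x) atTop (𝓝 ‖J x‖)) :
    ∃ θ : ℕ → ℕ, StrictMono θ ∧ ∃ M : StrongDual ℝ F,
      ∀ x, Tendsto (fun k => G (θ k) x) atTop (𝓝 (M (J x))) := by
  have hGK (k : ℕ) : ‖G k‖ ≤ K := (G k).opNorm_le_bound K.2 fun x =>
    (hG k x).trans (mul_le_mul_of_nonneg_left (hN k x) K.2)
  obtain ⟨θ, hθ, L, hL⟩ := exists_subseq_tendsto_strongDual G K hGK
  have hLJ (x : E) : ‖L x‖ ≤ K * ‖J x‖ :=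
    le_of_tendsto_of_tendsto' (hL x).norm
      (((hJ x).comp hθ.tendsto_atTop).const_mul (K : ℝ)) fun k => hG (θ k) x
  obtain ⟨M, hM⟩ := exists_strongDual_comp_eq J L K hLJ
  exact ⟨θ, hθ, M, fun x => hM x ▸ hL x⟩

end FunctionalAnalysis

lemma isClosed_setOf_tendsto_of_norm_le {𝕜 E F ι : Type*} [NontriviallyNormedField 𝕜]
    [NormedAddCommGroup E] [NormedSpace 𝕜 E] [NormedAddCommGroup F] [NormedSpace 𝕜 F]
    {l : Filter ι} {A : ι → E →L[𝕜] F} {C : ℝ≥0} (hA : ∀ i, ‖A i‖ ≤ C)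
    {B : E → F} (hB : Continuous B) : IsClosed {x | Tendsto (fun i => A i x) l (𝓝 (B x))} :=
  (LipschitzWith.uniformEquicontinuous _ C fun i =>
    (A i).lipschitz.weaken (hA i)).equicontinuous.isClosed_setOfPred_tendsto hB

lemma tendsto_clm_apply_of_dense_span {𝕜 E F ι : Type*} [NontriviallyNormedField 𝕜]
    [NormedAddCommGroup E] [NormedSpace 𝕜 E] [NormedAddCommGroup F] [NormedSpace 𝕜 F]
    {l : Filter ι} {A : ι → E →L[𝕜] F} {C : ℝ≥0} (hA : ∀ i, ‖A i‖ ≤ C) (B : E →L[𝕜] F)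
    {s : Set E} (hs : (Submodule.span 𝕜 s).topologicalClosure = ⊤)
    (h : ∀ x ∈ s, Tendsto (fun i => A i x) l (𝓝 (B x))) (x : E) :
    Tendsto (fun i => A i x) l (𝓝 (B x)) := by
  refine closure_minimal (fun y hy => ?_) (isClosed_setOf_tendsto_of_norm_le hA B.continuous)
    (hs ▸ Submodule.mem_top : x ∈ (Submodule.span 𝕜 s).topologicalClosure)
  induction hy using Submodule.span_induction with
  | mem y hy => exact h y hy
  | zero => simpa only [Set.mem_ofPred_eq, map_zero] using tendsto_const_nhds
  | add y z _ _ hy hz => simpa only [Set.mem_ofPred_eq, map_add] using hy.add hz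
  | smul c y _ hy => simpa only [Set.mem_ofPred_eq, map_smul] using hy.const_smul c

section Evaluation

variable {𝕜 X T : Type*} [RCLike 𝕜] [MeasurableSpace X] [TopologicalSpace T] [CompactSpace T]
  {μ : Measure X} {p : ℝ≥0∞}

lemma memLp_eval {F : X → C(T, 𝕜)} (hF : MemLp F p μ) {t : X → T}
    (ht : AEStronglyMeasurable t μ) : MemLp (fun x => F x (t x)) p μ :=
  hF.mono (continuous_eval.comp_aestronglyMeasurable (hF.aestronglyMeasurable.prodMk ht))
    (.of_forall fun x => (F x).norm_coe_le_norm (t x))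

variable [Fact (1 ≤ p)]

/-- The contraction `L^p(X; C(T)) → L^p(X)` that evaluates `g` along a map `t : X → T`,
`g ↦ (x ↦ g x (t x))`. -/
def evalLp (t : X → T) (ht : AEStronglyMeasurable t μ) : Lp C(T, 𝕜) p μ →L[𝕜] Lp 𝕜 p μ :=
  LinearMap.mkContinuous
    { toFun g := (memLp_eval (Lp.memLp g) ht).toLp
      map_add' g h := by
        rw [← MemLp.toLp_add]
        refine MemLp.toLp_congr _ _ ?_
        filter_upwards [Lp.coeFn_add g h] with x hx
        exact DFunLike.congr_fun hx (t x)
      map_smul' c g := by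
        rw [RingHom.id_apply, ← MemLp.toLp_const_smul]
        refine MemLp.toLp_congr _ _ ?_
        filter_upwards [Lp.coeFn_smul c g] with x hx
        exact DFunLike.congr_fun hx (t x) }
    1 fun g => by
      rw [one_mul]
      refine Lp.norm_le_norm_of_ae_le ?_
      filter_upwards [(memLp_eval (Lp.memLp g) ht).coeFn_toLp] with x hx
      exact hx ▸ (g x).norm_coe_le_norm (t x)

lemma coeFn_evalLp {t : X → T} (ht : AEStronglyMeasurable t μ) (g : Lp C(T, 𝕜) p μ) :
    evalLp t ht g =ᵐ[μ] fun x => g x (t x) :=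
  (memLp_eval (Lp.memLp g) ht).coeFn_toLp

lemma norm_evalLp_le {t : X → T} (ht : AEStronglyMeasurable t μ) :
    ‖(evalLp t ht : Lp C(T, 𝕜) p μ →L[𝕜] Lp 𝕜 p μ)‖ ≤ 1 :=
  LinearMap.mkContinuous_norm_le _ zero_le_one _

/-- The contraction `g ↦ ∫ g x (t x) dμ` on `L¹(X; C(T))`. -/
def integralEval (t : X → T) (ht : AEStronglyMeasurable t μ) : Lp C(T, 𝕜) 1 μ →L[𝕜] 𝕜 :=
  L1.integralCLM' 𝕜 ∘L evalLp t ht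

lemma integralEval_eq_integral_evalLp {t : X → T} (ht : AEStronglyMeasurable t μ)
    (g : Lp C(T, 𝕜) 1 μ) : integralEval t ht g = L1.integral (evalLp t ht g) :=
  (L1.integral_eq' 𝕜 _).symm

lemma integralEval_apply {t : X → T} (ht : AEStronglyMeasurable t μ) (g : Lp C(T, 𝕜) 1 μ) :
    integralEval t ht g = ∫ x, g x (t x) ∂μ := by
  rw [integralEval_eq_integral_evalLp, L1.integral_eq_integral,
    integral_congr_ae (coeFn_evalLp ht g)]

lemma norm_integralEval_le {t : X → T} (ht : AEStronglyMeasurable t μ) :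
    ‖(integralEval t ht : Lp C(T, 𝕜) 1 μ →L[𝕜] 𝕜)‖ ≤ 1 := by
  refine ContinuousLinearMap.opNorm_le_bound _ zero_le_one fun g => ?_
  calc ‖integralEval t ht g‖ ≤ ‖evalLp t ht g‖ := by
        rw [integralEval_eq_integral_evalLp]
        exact L1.norm_integral_le _
    _ ≤ 1 * ‖g‖ := ContinuousLinearMap.le_of_opNorm_le _ (norm_evalLp_le ht) g

variable [MeasurableSpace T] [BorelSpace T] [SecondCountableTopology T]
  [TopologicalSpace.PseudoMetrizableSpace T] (ρ : Measure T) [IsProbabilityMeasure ρ]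

/-- The contraction `L^p(X; C(T)) → L^p(X × T)` that reads `g` as a function of two variables;
the measure on `T` is a probability. -/
def uncurryLp : Lp C(T, 𝕜) p μ →L[𝕜] Lp 𝕜 p (μ.prod ρ) :=
  evalLp Prod.snd measurable_snd.aestronglyMeasurable ∘L
    (Lp.compMeasurePreservingₗᵢ 𝕜 Prod.fst
      (measurePreserving_fst (μ := μ) (ν := ρ))).toContinuousLinearMap

lemma coeFn_uncurryLp (g : Lp C(T, 𝕜) p μ) :
    uncurryLp ρ g =ᵐ[μ.prod ρ] fun z => g z.1 z.2 := by
  have heval : uncurryLp ρ g =ᵐ[μ.prod ρ] fun z =>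
      Lp.compMeasurePreserving Prod.fst (measurePreserving_fst (ν := ρ)) g z z.2 :=
    coeFn_evalLp measurable_snd.aestronglyMeasurable _
  filter_upwards [heval, Lp.coeFn_compMeasurePreserving g (measurePreserving_fst (ν := ρ))]
    with z h₁ h₂
  exact h₁.trans (DFunLike.congr_fun h₂ z.2)

end Evaluation

lemma norm_lp_eq_integral_rpow {X E : Type*} [MeasurableSpace X] [NormedAddCommGroup E]
    {μ : Measure X} {p : ℝ≥0∞} (hp₀ : p ≠ 0) (hp : p ≠ ∞) {g : Lp E p μ} {f : X → E}
    (hgf : g =ᵐ[μ] f) : ‖g‖ = (∫ x, ‖f x‖ ^ p.toReal ∂μ) ^ p.toReal⁻¹ := by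
  rw [Lp.norm_def, eLpNorm_congr_ae hgf,
    ((memLp_congr_ae hgf).1 (Lp.memLp g)).eLpNorm_eq_integral_rpow_norm hp₀ hp,
    ENNReal.toReal_ofReal (by positivity)]

lemma integrable_mul_simpleFunc {X : Type*} [MeasurableSpace X] {μ : Measure X} {f : X → ℝ}
    (hf : Integrable f μ) (g : SimpleFunc X ℝ) : Integrable (fun z => f z * g z) μ := by
  obtain ⟨C, hC⟩ := g.exists_forall_norm_le
  exact hf.mul_bdd g.aestronglyMeasurable (.of_forall hC)

section Duality

variable {Z : Type*} [MeasurableSpace Z] (ν : Measure Z) [IsFiniteMeasure ν] {p q : ℝ≥0∞}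

lemma hasSum_indicatorConstLp_one [Fact (1 ≤ q)] (hq : q ≠ ∞) {A : ℕ → Set Z}
    (hA : ∀ i, MeasurableSet (A i)) (hdisj : Pairwise (Function.onFun Disjoint A)) :
    HasSum (fun i => indicatorConstLp q (hA i) (measure_ne_top ν _) (1 : ℝ))
      (indicatorConstLp q (MeasurableSet.iUnion hA) (measure_ne_top ν _) 1) := by
  have hF (F : Finset ℕ) : MeasurableSet (⋃ i ∈ F, A i) := F.measurableSet_biUnion fun i _ => hA i
  have hsum (F : Finset ℕ) : indicatorConstLp q (hF F) (measure_ne_top ν _) (1 : ℝ) =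
      ∑ i ∈ F, indicatorConstLp q (hA i) (measure_ne_top ν _) 1 := by
    induction F using Finset.induction_on with
    | empty => simp
    | insert a F ha ih =>
      have hdisj' : Disjoint (A a) (⋃ i ∈ F, A i) :=
        Set.disjoint_iUnion₂_right.2 fun i hi => hdisj (ne_of_mem_of_not_mem hi ha).symm
      rw [Finset.sum_insert ha, ← ih, ← indicatorConstLp_disjoint_union _ _ _ _ hdisj']
      congr 1
      exact Finset.set_biUnion_insert a F A
  have hsymm (F : Finset ℕ) :
      ν (symmDiff (⋃ i ∈ F, A i) (⋃ i, A i)) ≤ ∑' i : {i // i ∉ F}, ν (A i) := by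
    rw [symmDiff_of_le (Set.iUnion₂_subset fun i _ => Set.subset_iUnion A i)]
    refine (measure_mono fun z hz => ?_).trans (measure_iUnion_le _)
    obtain ⟨i, hi⟩ := Set.mem_iUnion.1 hz.1
    exact Set.mem_iUnion.2 ⟨⟨i, fun hiF => hz.2 (Set.mem_biUnion hiF hi)⟩, hi⟩
  have htail : ∑' i, ν (A i) ≠ ∞ := measure_iUnion hdisj hA ▸ measure_ne_top ν _
  refine (tendsto_indicatorConstLp_set hq (ht := hF) (hμt := fun _ => measure_ne_top ν _)
    (tendsto_of_tendsto_of_tendsto_of_le_of_le tendsto_const_nhds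
      (ENNReal.tendsto_tsum_compl_atTop_zero htail) (fun _ => zero_le) hsymm)).congr hsum

open Classical in
/-- The `L^q`-valued vector measure `A ↦ 1_A` on a finite measure space; composed with a functional
on `L^q` it becomes a signed measure. -/
def indicatorVectorMeasure [Fact (1 ≤ q)] (hq : q ≠ ∞) : VectorMeasure Z (Lp ℝ q ν) where
  measureOf' A :=
    if hA : MeasurableSet A then indicatorConstLp q hA (measure_ne_top ν A) 1 else 0
  empty' := by simp
  not_measurable' _ hA := dif_neg hA
  m_iUnion' A hA hdisj := by
    simpa only [dif_pos (hA _), dif_pos (MeasurableSet.iUnion hA)] using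
      hasSum_indicatorConstLp_one ν hq hA hdisj

lemma indicatorVectorMeasure_apply [Fact (1 ≤ q)] (hq : q ≠ ∞) {A : Set Z}
    (hA : MeasurableSet A) :
    indicatorVectorMeasure ν hq A = indicatorConstLp q hA (measure_ne_top ν A) 1 :=
  dif_pos hA

variable {ν}

lemma exists_integrable_eq_setIntegral [Fact (1 ≤ q)] (hq : q ≠ ∞)
    (G : StrongDual ℝ (Lp ℝ q ν)) :
    ∃ f : Z → ℝ, Measurable f ∧ Integrable f ν ∧ ∀ {A : Set Z} (hA : MeasurableSet A),
      G (indicatorConstLp q hA (measure_ne_top ν A) 1) = ∫ z in A, f z ∂ν := by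
  let s : SignedMeasure Z :=
    (indicatorVectorMeasure ν hq).mapRange (G : Lp ℝ q ν →+ ℝ) G.continuous
  have hs {A : Set Z} (hA : MeasurableSet A) :
      s A = G (indicatorConstLp q hA (measure_ne_top ν A) 1) :=
    congrArg G (indicatorVectorMeasure_apply ν hq hA)
  have hac : s ≪ᵥ ν.toENNRealVectorMeasure := by
    refine VectorMeasure.AbsolutelyContinuous.mk fun A hA hνA => ?_
    rw [Measure.toENNRealVectorMeasure_apply_measurable hA] at hνA
    have hzero : indicatorConstLp q hA (measure_ne_top ν A) (1 : ℝ) = 0 := by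
      rw [Lp.eq_zero_iff_ae_eq_zero]
      exact indicatorConstLp_coeFn.trans (indicator_meas_zero hνA)
    rw [hs hA, hzero, map_zero]
  refine ⟨s.rnDeriv ν, s.measurable_rnDeriv ν, s.integrable_rnDeriv ν, fun {A} hA => ?_⟩
  rw [← hs hA, ← withDensityᵥ_apply (s.integrable_rnDeriv ν) hA,
    s.withDensityᵥ_rnDeriv_eq ν hac]

lemma map_toLp_simpleFunc_eq_integral [Fact (1 ≤ q)] {G : StrongDual ℝ (Lp ℝ q ν)} {f : Z → ℝ}
    (hf : Integrable f ν)
    (hG : ∀ {A : Set Z} (hA : MeasurableSet A),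
      G (indicatorConstLp q hA (measure_ne_top ν A) 1) = ∫ z in A, f z ∂ν)
    (g : SimpleFunc Z ℝ) : G ((g.memLp_of_isFiniteMeasure q ν).toLp g) = ∫ z, f z * g z ∂ν := by
  induction g using SimpleFunc.induction with
  | @const c A hA =>
    have hsmul : (SimpleFunc.memLp_of_isFiniteMeasure (SimpleFunc.piecewise A hA
          (SimpleFunc.const Z c) (SimpleFunc.const Z 0)) q ν).toLp _ =
        c • indicatorConstLp q hA (measure_ne_top ν A) (1 : ℝ) := by
      rw [indicatorConstLp, ← MemLp.toLp_const_smul]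
      refine MemLp.toLp_congr _ _ (.of_forall fun z => ?_)
      by_cases hz : z ∈ A <;> simp [hz, SimpleFunc.piecewise_apply]
    rw [hsmul, map_smul, hG hA, smul_eq_mul, ← integral_const_mul, ← integral_indicator hA]
    congr 1 with z
    by_cases hz : z ∈ A <;> simp [hz, SimpleFunc.piecewise_apply, mul_comm]
  | add _ hg hh =>
    rename_i g h _
    have hadd : ((g + h).memLp_of_isFiniteMeasure q ν).toLp _ =
        (g.memLp_of_isFiniteMeasure q ν).toLp g + (h.memLp_of_isFiniteMeasure q ν).toLp h :=
      MemLp.toLp_add _ _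
    rw [hadd, map_add, hg, hh,
      ← integral_add (integrable_mul_simpleFunc hf g) (integrable_mul_simpleFunc hf h)]
    simp only [SimpleFunc.coe_add, Pi.add_apply, mul_add]

lemma le_rpow_of_le_mul_rpow {p q a K : ℝ} (hpq : p.HolderConjugate q) (ha : 0 ≤ a) (hK : 0 ≤ K)
    (h : a ≤ K * a ^ q⁻¹) : a ≤ K ^ p := by
  rcases ha.eq_or_lt with rfl | ha
  · positivity
  rw [← Real.rpow_inv_le_iff_of_pos ha.le hK hpq.pos]
  refine le_of_mul_le_mul_right ?_ (Real.rpow_pos_of_pos ha q⁻¹)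
  rwa [← Real.rpow_add ha, hpq.inv_add_inv_eq_one, Real.rpow_one]

-- Test the functional on `sign f * φ ^ (1 / q)`: then `φ = φ ^ (1 / p) * φ ^ (1 / q) ≤ f * g`.
lemma integral_simpleFunc_le_rpow {p q K : ℝ} (hpq : p.HolderConjugate q) (hK : 0 ≤ K)
    {f : Z → ℝ} (hfm : Measurable f) (hf : Integrable f ν)
    (hbound : ∀ g : SimpleFunc Z ℝ, ∫ z, f z * g z ∂ν ≤ K * (∫ z, |g z| ^ q ∂ν) ^ q⁻¹)
    (φ : SimpleFunc Z ℝ≥0) (hφ : ∀ z, (φ z : ℝ) ≤ |f z| ^ p) : ∫ z, (φ z : ℝ) ∂ν ≤ K ^ p := by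
  have hpow (z : Z) : (φ z : ℝ) ≤ |f z| * φ z ^ q⁻¹ := by
    have hp := hpq.pos
    have hq := hpq.symm.pos
    calc (φ z : ℝ) = (φ z : ℝ) ^ p⁻¹ * φ z ^ q⁻¹ := by
          rw [← Real.rpow_add_of_nonneg (φ z).coe_nonneg (by positivity) (by positivity),
            hpq.inv_add_inv_eq_one, Real.rpow_one]
      _ ≤ |f z| * φ z ^ q⁻¹ := by
          gcongr
          rw [Real.rpow_inv_le_iff_of_pos (φ z).coe_nonneg (abs_nonneg _) hp]
          exact hφ z
  let ψ : SimpleFunc Z ℝ := φ.map fun t : ℝ≥0 => (t : ℝ) ^ q⁻¹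
  let g : SimpleFunc Z ℝ := SimpleFunc.piecewise {z | 0 ≤ f z} (hfm measurableSet_Ici) ψ (-ψ)
  have hfg (z : Z) : f z * g z = |f z| * φ z ^ q⁻¹ := by
    by_cases h : 0 ≤ f z
    · simp [g, ψ, SimpleFunc.piecewise_apply, h, abs_of_nonneg h]
    · simp [g, ψ, SimpleFunc.piecewise_apply, h, abs_of_neg (not_le.1 h)]
  have hgq (z : Z) : |g z| ^ q = φ z := by
    have habs : |g z| = (φ z : ℝ) ^ q⁻¹ := by
      by_cases h : 0 ≤ f z <;>
        simp [g, ψ, SimpleFunc.piecewise_apply, h, abs_of_nonneg (Real.rpow_nonneg _ _)]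
    rw [habs, Real.rpow_inv_rpow (φ z).coe_nonneg hpq.symm.ne_zero]
  refine le_rpow_of_le_mul_rpow hpq (integral_nonneg fun z => (φ z).coe_nonneg) hK ?_
  calc ∫ z, (φ z : ℝ) ∂ν ≤ ∫ z, f z * g z ∂ν :=
        integral_mono (φ.map ((↑) : ℝ≥0 → ℝ)).integrable_of_isFiniteMeasure
          (integrable_mul_simpleFunc hf g) fun z => (hpow z).trans_eq (hfg z).symm
    _ ≤ K * (∫ z, (φ z : ℝ) ∂ν) ^ q⁻¹ := by simpa only [hgq] using hbound g

lemma memLp_of_integral_mul_simpleFunc_le {K : ℝ} [p.HolderConjugate q] (hp : p ≠ ∞)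
    (hq : q ≠ ∞) (hK : 0 ≤ K) {f : Z → ℝ} (hfm : Measurable f) (hf : Integrable f ν)
    (hbound : ∀ g : SimpleFunc Z ℝ,
      ∫ z, f z * g z ∂ν ≤ K * (∫ z, |g z| ^ q.toReal ∂ν) ^ q.toReal⁻¹) :
    MemLp f p ν := by
  have hpq : p.toReal.HolderConjugate q.toReal := ENNReal.HolderConjugate.toReal_of_ne_top hp hq
  refine ⟨hfm.aestronglyMeasurable, ?_⟩
  rw [eLpNorm_lt_top_iff_lintegral_rpow_enorm_lt_top (ENNReal.HolderConjugate.ne_zero p q) hp,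
    lintegral_eq_nnreal]
  refine (iSup₂_le fun φ hφ => ?_).trans_lt (ENNReal.ofReal_lt_top (r := K ^ p.toReal))
  have hφ' (z : Z) : (φ z : ℝ) ≤ |f z| ^ p.toReal := by
    have hz := hφ z
    rwa [← ofReal_norm, ENNReal.ofReal_rpow_of_nonneg (norm_nonneg _) hpq.nonneg,
      ← ENNReal.ofReal_coe_nnreal, ENNReal.ofReal_le_ofReal_iff (by positivity)] at hz
  have hφi : Integrable (fun z => (φ z : ℝ)) ν :=
    (φ.map ((↑) : ℝ≥0 → ℝ)).integrable_of_isFiniteMeasure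
  calc (φ.map ((↑) : ℝ≥0 → ℝ≥0∞)).lintegral ν = ∫⁻ z, φ z ∂ν :=
        (SimpleFunc.lintegral_eq_lintegral _ ν).symm
    _ = ENNReal.ofReal (∫ z, (φ z : ℝ) ∂ν) := by
        rw [ofReal_integral_eq_lintegral_ofReal hφi (.of_forall fun z => (φ z).coe_nonneg)]
        simp only [ENNReal.ofReal_coe_nnreal]
    _ ≤ ENNReal.ofReal (K ^ p.toReal) :=
        ENNReal.ofReal_le_ofReal (integral_simpleFunc_le_rpow hpq hK hfm hf hbound φ hφ')

lemma lpPairing_mul_surjective [Fact (1 ≤ p)] [Fact (1 ≤ q)] [p.HolderConjugate q] (hp : p ≠ ∞)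
    (hq : q ≠ ∞) : Function.Surjective ((ContinuousLinearMap.mul ℝ ℝ).lpPairing ν p q) := by
  intro G
  obtain ⟨f, hfm, hf, hG⟩ := exists_integrable_eq_setIntegral hq G
  have hGs := map_toLp_simpleFunc_eq_integral hf hG
  have hbound (g : SimpleFunc Z ℝ) :
      ∫ z, f z * g z ∂ν ≤ ‖G‖ * (∫ z, |g z| ^ q.toReal ∂ν) ^ q.toReal⁻¹ := by
    have hg := g.memLp_of_isFiniteMeasure q ν
    rw [← hGs g]
    refine (le_abs_self _).trans ((G.le_opNorm _).trans_eq ?_)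
    rw [norm_lp_eq_integral_rpow (ENNReal.HolderConjugate.ne_zero q p) hq hg.coeFn_toLp]
    rfl
  have hfp : MemLp f p ν :=
    memLp_of_integral_mul_simpleFunc_le hp hq (norm_nonneg G) hfm hf hbound
  refine ⟨hfp.toLp f, ContinuousLinearMap.ext fun g => ?_⟩
  refine (Lp.simpleFunc.denseRange (E := ℝ) (μ := ν) hq).induction_on g
    (isClosed_eq (ContinuousLinearMap.continuous _) G.continuous) fun g => ?_
  let gs : SimpleFunc Z ℝ := Lp.simpleFunc.toSimpleFunc g
  have hgs : (g : Lp ℝ q ν) = (gs.memLp_of_isFiniteMeasure q ν).toLp gs :=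
    congrArg Subtype.val (Lp.simpleFunc.toLp_toSimpleFunc g).symm
  rw [hgs, hGs, ContinuousLinearMap.lpPairing_eq_integral]
  refine integral_congr_ae ?_
  filter_upwards [hfp.coeFn_toLp, (gs.memLp_of_isFiniteMeasure q ν).coeFn_toLp] with z h₁ h₂
  rw [h₁, h₂, ContinuousLinearMap.mul_apply']

end Duality

section Equidistribution

variable {X T ι : Type*} [MeasurableSpace X] [TopologicalSpace T] [MeasurableSpace T]

/-- The maps `t i : X → T` equidistribute with respect to `ρ` along `l`, uniformly in space: on
every measurable part of `X`, the averages of a continuous function along `t i` converge to its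
`ρ`-mean. -/
structure Equidistributed (μ : Measure X) (ρ : Measure T) (l : Filter ι) (t : ι → X → T) :
    Prop where
  aestronglyMeasurable (i : ι) : AEStronglyMeasurable (t i) μ
  tendsto_setIntegral {s : Set X} (hs : MeasurableSet s) (f : C(T, ℝ)) :
    Tendsto (fun i => ∫ x in s, f (t i x) ∂μ) l (𝓝 (μ.real s * ∫ y, f y ∂ρ))

namespace Equidistributed

variable {μ : Measure X} {ρ : Measure T} {l : Filter ι} {t : ι → X → T}

variable [CompactSpace T] [BorelSpace T] [SecondCountableTopology T]
  [TopologicalSpace.PseudoMetrizableSpace T] [IsProbabilityMeasure ρ] [IsFiniteMeasure μ]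

lemma tendsto_integralEval (ht : Equidistributed μ ρ l t) (g : Lp C(T, ℝ) 1 μ) :
    Tendsto (fun i => integralEval (t i) (ht.aestronglyMeasurable i) g) l
      (𝓝 (L1.integralCLM' ℝ (uncurryLp ρ g))) := by
  induction g using Lp.induction ENNReal.one_ne_top with
  | @indicatorConst f s hs hμs =>
    have hcoe : (indicatorConstLp 1 hs hμs.ne f : X → C(T, ℝ)) =ᵐ[μ] s.indicator fun _ => f :=
      indicatorConstLp_coeFn
    have hlim : L1.integralCLM' ℝ (uncurryLp ρ (indicatorConstLp 1 hs hμs.ne f)) =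
        μ.real s * ∫ y, f y ∂ρ := by
      rw [← L1.integral_eq', L1.integral_eq_integral]
      calc ∫ z, uncurryLp ρ (indicatorConstLp 1 hs hμs.ne f) z ∂μ.prod ρ
          = ∫ z, s.indicator 1 z.1 * f z.2 ∂μ.prod ρ := by
            refine integral_congr_ae ?_
            filter_upwards [coeFn_uncurryLp ρ (indicatorConstLp 1 hs hμs.ne f),
              Measure.quasiMeasurePreserving_fst.ae hcoe] with z h₁ h₂
            rw [h₁, h₂]
            by_cases hz : z.1 ∈ s <;> simp [hz]
        _ = μ.real s * ∫ y, f y ∂ρ := by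
            rw [integral_prod_mul, integral_indicator_one hs]
    rw [Lp.simpleFunc.coe_indicatorConst, hlim]
    refine (ht.tendsto_setIntegral hs f).congr fun i => ?_
    rw [integralEval_apply, ← integral_indicator hs]
    refine integral_congr_ae ?_
    filter_upwards [hcoe] with x hx
    rw [hx]
    by_cases hxs : x ∈ s <;> simp [hxs]
  | add F G _ hF' hG' =>
    simpa only [map_add] using hF'.add hG'
  | isClosed =>
    refine isClosed_setOf_tendsto_of_norm_le (C := 1) (fun i => ?_)
      ((L1.integralCLM' ℝ).continuous.comp (uncurryLp ρ).continuous)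
    simpa only [NNReal.coe_one] using norm_integralEval_le (𝕜 := ℝ) (ht.aestronglyMeasurable i)

lemma tendsto_integral_eval (ht : Equidistributed μ ρ l t) {F : X → C(T, ℝ)}
    (hF : Integrable F μ) :
    Tendsto (fun i => ∫ x, F x (t i x) ∂μ) l (𝓝 (∫ z, F z.1 z.2 ∂μ.prod ρ)) := by
  have hlim : L1.integralCLM' ℝ (uncurryLp ρ hF.toL1) = ∫ z, F z.1 z.2 ∂μ.prod ρ := by
    rw [← L1.integral_eq', L1.integral_eq_integral]
    refine integral_congr_ae ?_
    filter_upwards [coeFn_uncurryLp ρ hF.toL1,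
      Measure.quasiMeasurePreserving_fst.ae hF.coeFn_toL1] with z h₁ h₂
    rw [h₁, h₂]
  rw [← hlim]
  refine (ht.tendsto_integralEval hF.toL1).congr fun i => ?_
  rw [integralEval_apply]
  refine integral_congr_ae ?_
  filter_upwards [hF.coeFn_toL1] with x hx
  rw [hx]

lemma tendsto_norm_evalLp {p : ℝ≥0∞} [Fact (1 ≤ p)] (hp : p ≠ ∞)
    (ht : Equidistributed μ ρ l t) (g : Lp C(T, ℝ) p μ) :
    Tendsto (fun i => ‖evalLp (t i) (ht.aestronglyMeasurable i) g‖) l (𝓝 ‖uncurryLp ρ g‖) := by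
  have hp₁ : p ≠ 0 := (zero_lt_one.trans_le Fact.out).ne'
  have hp₀ : 0 < p.toReal := ENNReal.toReal_pos hp₁ hp
  let P : C(ℝ, ℝ) := ⟨fun s => ‖s‖ ^ p.toReal, by fun_prop (disch := simp [hp₀.le])⟩
  have hP : Integrable (fun x => P.comp (g x)) μ := by
    refine ((Lp.memLp g).integrable_norm_rpow hp₁ hp).mono'
      ((ContinuousMap.continuous_postcomp P).comp_aestronglyMeasurable (Lp.aestronglyMeasurable g))
      (.of_forall fun x => (ContinuousMap.norm_le _ (by positivity)).2 fun y => ?_)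
    rw [ContinuousMap.comp_apply, ContinuousMap.coe_mk, Real.norm_of_nonneg (by positivity)]
    gcongr
    exact (g x).norm_coe_le_norm y
  have hlim := (ht.tendsto_integral_eval hP).rpow_const (p := p.toReal⁻¹) (.inr (by positivity))
  rw [norm_lp_eq_integral_rpow hp₁ hp (coeFn_uncurryLp ρ g)]
  refine hlim.congr fun i => ?_
  rw [norm_lp_eq_integral_rpow hp₁ hp (coeFn_evalLp (ht.aestronglyMeasurable i) g)]
  rfl

lemma exists_subseq_tendsto_integral {t : ℕ → X → T} {p q : ℝ≥0∞} [Fact (1 ≤ p)] [Fact (1 ≤ q)]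
    [p.HolderConjugate q] (hp : p ≠ ∞) (hq : q ≠ ∞) [IsSeparable μ]
    (ht : Equidistributed μ ρ atTop t) (u : ℕ → Lp ℝ p μ) (C : ℝ≥0) (hu : ∀ k, ‖u k‖ ≤ C) :
    ∃ θ : ℕ → ℕ, StrictMono θ ∧ ∃ f : Lp ℝ p (μ.prod ρ), ∀ g : Lp C(T, ℝ) q μ,
      Tendsto (fun k => ∫ x, u (θ k) x * g x (t (θ k) x) ∂μ) atTop
        (𝓝 (∫ z, f z * g z.1 z.2 ∂μ.prod ρ)) := by
  have : Fact (q ≠ ∞) := ⟨hq⟩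
  let B := (ContinuousLinearMap.mul ℝ ℝ).lpPairing μ p q
  let ev (k : ℕ) : Lp C(T, ℝ) q μ →L[ℝ] Lp ℝ q μ := evalLp (t k) (ht.aestronglyMeasurable k)
  have hbound (k : ℕ) (g : Lp C(T, ℝ) q μ) : ‖B (u k) (ev k g)‖ ≤ (‖B‖₊ * C : ℝ≥0) * ‖ev k g‖ :=
    (B.le_opNorm₂ _ _).trans (by gcongr; exact mul_le_mul_of_nonneg_left (hu k) (norm_nonneg B))
  obtain ⟨θ, hθ, M, hM⟩ := exists_subseq_tendsto_strongDual_comp (fun k => B (u k) ∘L ev k)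
    (uncurryLp ρ) (fun k g => ‖ev k g‖) (‖B‖₊ * C) hbound
    (fun k g => (ContinuousLinearMap.le_of_opNorm_le _ (norm_evalLp_le _) g).trans_eq (one_mul _))
    (ht.tendsto_norm_evalLp hq)
  obtain ⟨f, rfl⟩ := lpPairing_mul_surjective (p := p) hp hq M
  refine ⟨θ, hθ, f, fun g => ?_⟩
  have hlim : (ContinuousLinearMap.mul ℝ ℝ).lpPairing (μ.prod ρ) p q f (uncurryLp ρ g) =
      ∫ z, f z * g z.1 z.2 ∂μ.prod ρ := by
    rw [ContinuousLinearMap.lpPairing_eq_integral]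
    refine integral_congr_ae ?_
    filter_upwards [coeFn_uncurryLp ρ g] with z hz
    rw [hz, ContinuousLinearMap.mul_apply']
  rw [← hlim]
  refine (hM g).congr fun k => ?_
  rw [ContinuousLinearMap.comp_apply, ContinuousLinearMap.lpPairing_eq_integral]
  refine integral_congr_ae ?_
  filter_upwards [coeFn_evalLp (ht.aestronglyMeasurable (θ k)) g] with x hx
  rw [hx, ContinuousLinearMap.mul_apply']

end Equidistributed

end Equidistribution

section Torus

instance isProbabilityMeasure_volume_unitAddCircle :
    IsProbabilityMeasure (volume : Measure UnitAddCircle) :=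
  ⟨UnitAddCircle.measure_univ⟩

instance isProbabilityMeasure_volume_unitAddTorus (d : Type*) [Fintype d] :
    IsProbabilityMeasure (volume : Measure (UnitAddTorus d)) :=
  Measure.pi.instIsProbabilityMeasure _

variable {d : Type*}

/-- The projection of `ℝ^d` onto the torus `ℝ^d / ℤ^d`. -/
def toTorus (y : d → ℝ) : UnitAddTorus d := fun i => (y i : UnitAddCircle)

lemma continuous_toTorus : Continuous (toTorus (d := d)) :=
  continuous_pi fun i => (AddCircle.continuous_mk' 1).comp (continuous_apply i)

lemma isOpenQuotientMap_toTorus : IsOpenQuotientMap (toTorus (d := d)) :=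
  IsOpenQuotientMap.piMap fun _ => QuotientAddGroup.isOpenQuotientMap_mk

lemma toTorus_eq_toTorus_iff {y z : d → ℝ} :
    toTorus y = toTorus z ↔ ∃ k : d → ℤ, z = y + fun i => (k i : ℝ) := by
  have hcoord (i : d) : (y i : UnitAddCircle) = z i ↔ ∃ k : ℤ, z i = y i + k := by
    rw [eq_comm, ← sub_eq_zero, ← AddCircle.coe_sub, AddCircle.coe_eq_zero_iff]
    simp only [zsmul_one, sub_eq_iff_eq_add', eq_comm (b := z i - y i)]
  simp only [toTorus, funext_iff, hcoord, Pi.add_apply, Classical.skolem]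

variable [Fintype d]

lemma mFourier_toTorus (k : d → ℤ) (y : d → ℝ) :
    UnitAddTorus.mFourier k (toTorus y) = Real.fourierChar ((fun i => (k i : ℝ)) ⬝ᵥ y) := by
  simp only [Real.fourierChar_apply, UnitAddTorus.mFourier, toTorus, ContinuousMap.coe_mk,
    fourier_coe_apply, ← Complex.exp_sum, dotProduct]
  congr 1
  push_cast
  rw [Finset.mul_sum, Finset.sum_mul]
  exact Finset.sum_congr rfl fun i _ => by ring

lemma integral_mFourier_eq_zero {k : d → ℤ} (hk : k ≠ 0) :
    ∫ y : UnitAddTorus d, UnitAddTorus.mFourier k y = 0 := by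
  obtain ⟨i, hi⟩ := Function.ne_iff.1 hk
  simp only [UnitAddTorus.mFourier, ContinuousMap.coe_mk]
  rw [integral_fintype_prod_volume_eq_prod]
  exact Finset.prod_eq_zero (Finset.mem_univ i)
    (integral_eq_zero_of_add_right_eq_neg (fourier_add_half_inv_index hi zero_lt_one))

end Torus

section Weyl

variable {X ι d : Type*} [MeasurableSpace X] [Fintype d] {μ : Measure X} [IsFiniteMeasure μ]
  {l : Filter ι} {t : ι → X → UnitAddTorus d}

lemma integralEval_const {T : Type*} [TopologicalSpace T] [CompactSpace T] {t : X → T}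
    (ht : AEStronglyMeasurable t μ) (f : C(T, ℂ)) :
    integralEval t ht (Lp.constL 1 μ ℂ f) = ∫ x, f (t x) ∂μ := by
  rw [integralEval_apply]
  refine integral_congr_ae ?_
  filter_upwards [Lp.coeFn_const (p := 1) (μ := μ) f] with x hx
  exact DFunLike.congr_fun hx (t x)

lemma tendsto_integral_comp_of_mFourier (ht : ∀ i, AEStronglyMeasurable (t i) μ)
    (h : ∀ k : d → ℤ, k ≠ 0 → Tendsto (fun i => ∫ x, UnitAddTorus.mFourier k (t i x) ∂μ) l (𝓝 0))
    (f : C(UnitAddTorus d, ℂ)) :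
    Tendsto (fun i => ∫ x, f (t i x) ∂μ) l (𝓝 (μ.real Set.univ • ∫ y, f y)) := by
  let A (i : ι) : C(UnitAddTorus d, ℂ) →L[ℂ] ℂ := integralEval (t i) (ht i) ∘L Lp.constL 1 μ ℂ
  let B : C(UnitAddTorus d, ℂ) →L[ℂ] ℂ :=
    μ.real Set.univ • (integralEval id aestronglyMeasurable_id ∘L Lp.constL 1 volume ℂ)
  have hA (i : ι) (f : C(UnitAddTorus d, ℂ)) : A i f = ∫ x, f (t i x) ∂μ :=
    integralEval_const (ht i) f
  have hB (f : C(UnitAddTorus d, ℂ)) : B f = μ.real Set.univ • ∫ y, f y :=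
    congrArg (μ.real Set.univ • ·) (integralEval_const aestronglyMeasurable_id f)
  have hnorm (i : ι) : ‖A i‖ ≤ ‖(Lp.constL 1 μ ℂ : C(UnitAddTorus d, ℂ) →L[ℂ] _)‖₊ :=
    (ContinuousLinearMap.opNorm_comp_le _ _).trans
      (mul_le_of_le_one_left (norm_nonneg _) (norm_integralEval_le (𝕜 := ℂ) (ht i)))
  simp only [← hA, ← hB]
  refine tendsto_clm_apply_of_dense_span hnorm B UnitAddTorus.span_mFourier_closure_eq_top ?_ f
  rintro _ ⟨k, rfl⟩
  simp only [hA, hB]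
  rcases eq_or_ne k 0 with rfl | hk
  · simpa [UnitAddTorus.mFourier_zero] using tendsto_const_nhds
  · simpa [integral_mFourier_eq_zero hk] using h k hk

lemma equidistributed_of_mFourier (ht : ∀ i, AEStronglyMeasurable (t i) μ)
    (h : ∀ s, MeasurableSet s → ∀ k : d → ℤ, k ≠ 0 →
      Tendsto (fun i => ∫ x in s, UnitAddTorus.mFourier k (t i x) ∂μ) l (𝓝 0)) :
    Equidistributed μ volume l t where
  aestronglyMeasurable := ht
  tendsto_setIntegral {s} hs f := by
    let fC : C(UnitAddTorus d, ℂ) := ⟨fun y => f y, by fun_prop⟩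
    have hlim := tendsto_integral_comp_of_mFourier (fun i => (ht i).restrict) (h s hs) fC
    have hre := (Complex.continuous_re.tendsto _).comp hlim
    simpa [fC, Function.comp_def, integral_complex_ofReal] using hre

end Weyl

section RiemannLebesgue

variable {V : Type*} [NormedAddCommGroup V] [NormedSpace ℝ V] [FiniteDimensional ℝ V]
  [MeasurableSpace V] [BorelSpace V]

lemma tendsto_integral_fourierChar_cocompact (μ ν : Measure V) [IsFiniteMeasure μ]
    [ν.IsAddHaarMeasure] (hμ : μ ≪ ν) :
    Tendsto (fun w : StrongDual ℝ V => ∫ v, (Real.fourierChar (-w v) : ℂ) ∂μ)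
      (cocompact (StrongDual ℝ V)) (𝓝 0) := by
  refine (tendsto_integral_exp_smul_cocompact (fun v => ((μ.rnDeriv ν v).toReal : ℂ)) ν).congr
    fun w => ?_
  rw [← integral_rnDeriv_smul hμ]
  simp only [Circle.smul_def, smul_eq_mul, Complex.real_smul, mul_comm]

lemma equidistributed_toTorus_smul {ι d : Type*} [Fintype d] {l : Filter ι} (μ ν : Measure V)
    [IsFiniteMeasure μ] [ν.IsAddHaarMeasure] (hμ : μ ≪ ν) (A : V →L[ℝ] d → ℝ)
    (hA : ∀ k : d → ℤ, k ≠ 0 → ∃ v, (fun i => (k i : ℝ)) ⬝ᵥ A v ≠ 0)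
    {c : ι → ℝ} (hc : Tendsto c l (Bornology.cobounded ℝ)) :
    Equidistributed μ volume l fun i v => toTorus (c i • A v) := by
  refine equidistributed_of_mFourier (fun i => ?_) fun s _ k hk => ?_
  · exact (continuous_toTorus.comp (A.continuous.const_smul (c i))).aestronglyMeasurable
  let w : StrongDual ℝ V :=
    (LinearMap.toContinuousLinearMap (dotProductBilin ℝ ℝ (fun i => (k i : ℝ)))) ∘L A
  have hw : w ≠ 0 := by
    obtain ⟨v, hv⟩ := hA k hk
    exact fun h => hv (DFunLike.congr_fun h v)
  have hcw : Tendsto (fun i => -(c i • w)) l (cocompact (StrongDual ℝ V)) := by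
    rw [← Metric.cobounded_eq_cocompact, ← tendsto_norm_atTop_iff_cobounded]
    simp only [norm_neg, norm_smul]
    exact (tendsto_norm_atTop_iff_cobounded.2 hc).atTop_mul_const (norm_pos_iff.2 hw)
  refine ((tendsto_integral_fourierChar_cocompact (μ.restrict s) ν
    (Measure.restrict_le_self.absolutelyContinuous.trans hμ)).comp hcw).congr fun i => ?_
  simp [mFourier_toTorus, w, dotProduct_smul]

end RiemannLebesgue

lemma measurePreserving_toTorus (m : ℕ) :
    MeasurePreserving toTorus (volume.restrict (cube m)) volume := by
  have h := measurePreserving_pi (fun _ : Fin m => (volume : Measure ℝ).restrict (Set.Ioo 0 1))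
    (fun _ => (volume : Measure UnitAddCircle)) fun _ => by
      have := UnitAddCircle.measurePreserving_mk 0
      rwa [zero_add, ← Measure.restrict_congr_set Ioo_ae_eq_Ioc] at this
  rwa [← Measure.restrict_pi_pi] at h

section EvaluationMeasurability

variable {Z T E : Type*} [TopologicalSpace T] [CompactSpace T]
  [TopologicalSpace.SeparableSpace T] [PseudoMetricSpace E]

lemma preimage_closedBall_eq_iInter_denseSeq [Nonempty T] (F : Z → C(T, E)) (f : C(T, E)) (r : ℝ) :
    F ⁻¹' Metric.closedBall f r = ⋂ i, {z | dist (F z (TopologicalSpace.denseSeq T i))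
      (f (TopologicalSpace.denseSeq T i)) ≤ r} := by
  ext z
  simp only [Set.mem_preimage, Metric.mem_closedBall, Set.mem_iInter, Set.mem_ofPred_eq,
    ContinuousMap.dist_le_iff_of_nonempty]
  have hcl : IsClosed {t | dist (F z t) (f t) ≤ r} := isClosed_le (by fun_prop) continuous_const
  exact ⟨fun h i => h _, fun h t =>
    (TopologicalSpace.denseRange_denseSeq T).induction_on t hcl h⟩

lemma nullMeasurableSet_preimage_closedBall [MeasurableSpace Z] {ν : Measure Z} [Nonempty T]
    {F : Z → C(T, E)} (hF : ∀ t, AEStronglyMeasurable (fun z => F z t) ν) (f : C(T, E)) (r : ℝ) :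
    NullMeasurableSet (F ⁻¹' Metric.closedBall f r) ν := by
  rw [preimage_closedBall_eq_iInter_denseSeq]
  exact .iInter fun i => nullMeasurableSet_le
    ((hF _).dist aestronglyMeasurable_const).aemeasurable aemeasurable_const

lemma measurable_of_measurableSet_preimage_closedBall [MeasurableSpace Z]
    [SecondCountableTopology E] [MeasurableSpace E] [BorelSpace E] {F : Z → E}
    (hF : ∀ x r, MeasurableSet (F ⁻¹' Metric.closedBall x r)) : Measurable F := by
  refine measurable_of_isOpen fun s hs => ?_
  choose r hr hrs using fun x : s => Metric.nhds_basis_closedBall.mem_iff.1 (hs.mem_nhds x.2)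
  obtain ⟨I, hI, hU⟩ := TopologicalSpace.isOpen_iUnion_countable
    (fun x : s => Metric.ball (x : E) (r x)) fun _ => Metric.isOpen_ball
  have hs' : s = ⋃ x ∈ I, Metric.closedBall (x : E) (r x) := by
    refine subset_antisymm (fun y hy => ?_) (Set.iUnion₂_subset fun x _ => hrs x)
    have hy' : y ∈ ⋃ x ∈ I, Metric.ball (x : E) (r x) :=
      hU ▸ Set.mem_iUnion.2 ⟨⟨y, hy⟩, Metric.mem_ball_self (hr _)⟩
    exact Set.iUnion₂_mono (fun x _ => Metric.ball_subset_closedBall) hy'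
  rw [hs', Set.preimage_iUnion₂]
  exact .biUnion hI fun x _ => hF x (r x)

lemma aestronglyMeasurable_of_eval [MeasurableSpace Z] {ν : Measure Z} [Nonempty T]
    [SecondCountableTopology C(T, E)] {F : Z → C(T, E)}
    (hF : ∀ t, AEStronglyMeasurable (fun z => F z t) ν) : AEStronglyMeasurable F ν := by
  borelize C(T, E)
  have hball (f : C(T, E)) (r : ℝ) := nullMeasurableSet_preimage_closedBall hF f r
  have hnull : NullMeasurable F ν := fun _ hs =>
    measurable_of_measurableSet_preimage_closedBall (Z := NullMeasurableSpace Z ν) hball hs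
  exact hnull.aemeasurable.aestronglyMeasurable

end EvaluationMeasurability

lemma exists_continuousMap_comp_toTorus {d α : Type*} [TopologicalSpace α]
    {f : (d → ℝ) → α}
    (hf : Continuous f) (hper : ∀ (k : d → ℤ) y, f (y + fun i => (k i : ℝ)) = f y) :
    ∃ F : C(UnitAddTorus d, α), ∀ y, F (toTorus y) = f y := by
  have hfac (y z : d → ℝ) (h : toTorus y = toTorus z) : f y = f z := by
    obtain ⟨k, rfl⟩ := toTorus_eq_toTorus_iff.1 h
    exact (hper k y).symm
  let q : C(d → ℝ, UnitAddTorus d) := ⟨toTorus, continuous_toTorus⟩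
  have hq : IsQuotientMap q := isOpenQuotientMap_toTorus.isQuotientMap
  exact ⟨hq.lift ⟨f, hf⟩ hfac, fun y => DFunLike.congr_fun (hq.lift_comp ⟨f, hf⟩ hfac) y⟩

lemma TestFun.exists_lp {n m : ℕ} {q : ℝ} (hq : 0 < q) {Ω : Set (Fin n → ℝ)}
    {φ : (Fin n → ℝ) → (Fin m → ℝ) → ℝ} (hφ : TestFun q Ω φ) :
    ∃ g : Lp C(UnitAddTorus (Fin m), ℝ) (ENNReal.ofReal q) (volume.restrict Ω),
      ∀ᵐ x ∂volume.restrict Ω, ∀ y, g x (toTorus y) = φ x y := by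
  obtain ⟨hcont, hper, hmeas, hint⟩ := hφ
  have hsurj : Function.Surjective (toTorus (d := Fin m)) := isOpenQuotientMap_toTorus.surjective
  choose F hF using fun x => exists_continuousMap_comp_toTorus (hcont x) (hper x)
  have hFmeas : AEStronglyMeasurable F (volume.restrict Ω) := by
    refine aestronglyMeasurable_of_eval (hsurj.forall.2 fun y => ?_)
    simpa only [hF] using (hmeas y).aestronglyMeasurable
  have hFnorm (x) : ‖F x‖ = ⨆ y, |φ x y| := by
    rw [ContinuousMap.norm_eq_iSup_norm, ← hsurj.iSup_comp]
    simp only [hF, Real.norm_eq_abs]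
  have hFq : MemLp F (ENNReal.ofReal q) (volume.restrict Ω) := by
    rw [← integrable_norm_rpow_iff hFmeas (ENNReal.ofReal_pos.2 hq).ne' ENNReal.ofReal_ne_top]
    simpa only [hFnorm, ENNReal.toReal_ofReal hq.le] using hint
  refine ⟨hFq.toLp F, ?_⟩
  filter_upwards [hFq.coeFn_toLp] with x hx y
  rw [hx, hF]

lemma memLp_of_integrable_rpow {X : Type*} [MeasurableSpace X] {μ : Measure X} {p : ℝ}
    (hp : 0 < p) {f : X → ℝ} (hf : AEMeasurable f μ) (hfp : Integrable (fun x => |f x| ^ p) μ) :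
    MemLp f (ENNReal.ofReal p) μ := by
  rw [← integrable_norm_rpow_iff hf.aestronglyMeasurable (ENNReal.ofReal_pos.2 hp).ne'
    ENNReal.ofReal_ne_top]
  simpa only [Real.norm_eq_abs, ENNReal.toReal_ofReal hp.le] using hfp

lemma norm_toLp_le_of_integral_rpow_le {X : Type*} [MeasurableSpace X] {μ : Measure X} {p C : ℝ}
    (hp : 0 < p) {f : X → ℝ} (hf : MemLp f (ENNReal.ofReal p) μ) (hC : ∫ x, |f x| ^ p ∂μ ≤ C) :
    ‖hf.toLp f‖ ≤ (C ^ p⁻¹).toNNReal := by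
  rw [norm_lp_eq_integral_rpow (ENNReal.ofReal_pos.2 hp).ne' ENNReal.ofReal_ne_top hf.coeFn_toLp,
    ENNReal.toReal_ofReal hp.le]
  refine le_trans ?_ (Real.le_coe_toNNReal _)
  simp only [Real.norm_eq_abs]
  gcongr

lemma Irr.equidistributed {n m : ℕ} {R : Matrix (Fin m) (Fin n) ℝ} (hR : Irr R)
    {Ω : Set (Fin n → ℝ)} (hΩ : volume Ω ≠ ⊤) {ι : Type*} {l : Filter ι} {c : ι → ℝ}
    (hc : Tendsto c l (Bornology.cobounded ℝ)) :
    Equidistributed (volume.restrict Ω) volume l fun i x => toTorus (c i • R.mulVec x) := by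
  have : IsFiniteMeasure (volume.restrict Ω) := ⟨by simpa using hΩ.lt_top⟩
  refine equidistributed_toTorus_smul (volume.restrict Ω) volume
    Measure.restrict_le_self.absolutelyContinuous (LinearMap.toContinuousLinearMap R.mulVecLin)
    (fun k hk => ?_) hc
  by_contra! h
  refine hR k hk (dotProduct_eq_zero _ fun v => ?_)
  rw [mulVec_transpose, ← dotProduct_mulVec]
  exact h v

section Unfolding

variable {X : Type*} [MeasurableSpace X] {μ : Measure X} [SFinite μ] {m : ℕ}

lemma measurePreserving_prodMap_toTorus :
    MeasurePreserving (Prod.map id toTorus) (μ.prod (volume.restrict (cube m)))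
      (μ.prod volume) :=
  (MeasurePreserving.id _).prod (measurePreserving_toTorus m)

lemma integrable_rpow_comp_toTorus {p : ℝ} (hp : 0 < p)
    (f : Lp ℝ (ENNReal.ofReal p) (μ.prod (volume : Measure (UnitAddTorus (Fin m))))) :
    Integrable (fun z : X × (Fin m → ℝ) => |f (z.1, toTorus z.2)| ^ p)
      (μ.prod (volume.restrict (cube m))) := by
  have h := (Lp.memLp f).integrable_norm_rpow (ENNReal.ofReal_pos.2 hp).ne' ENNReal.ofReal_ne_top
  rw [ENNReal.toReal_ofReal hp.le] at h
  exact measurePreserving_prodMap_toTorus.integrable_comp_of_integrable h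

lemma integral_comp_toTorus {h : X × UnitAddTorus (Fin m) → ℝ}
    (hh : Integrable h (μ.prod volume)) :
    ∫ x, (∫ y in cube m, h (x, toTorus y)) ∂μ = ∫ z, h z ∂μ.prod volume := by
  have hmp := measurePreserving_prodMap_toTorus (μ := μ) (m := m)
  have hhc := hmp.integrable_comp_of_integrable hh
  calc ∫ x, (∫ y in cube m, h (x, toTorus y)) ∂μ
      = ∫ z, h (Prod.map id toTorus z) ∂μ.prod (volume.restrict (cube m)) :=
        (integral_prod _ hhc).symm
    _ = ∫ z, h z ∂μ.prod volume := by
        rw [← hmp.map_eq, integral_map hmp.aemeasurable (hmp.map_eq ▸ hh.aestronglyMeasurable)]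

end Unfolding

lemma zper_comp_toTorus {m : ℕ} {α : Type*} (f : UnitAddTorus (Fin m) → α) :
    Zper fun y => f (toTorus y) :=
  fun k _ => congrArg f (toTorus_eq_toTorus_iff.2 ⟨k, rfl⟩).symm

lemma weakTwoScale_comp_toTorus {n m : ℕ} {p q : ℝ} (hpq : p.HolderConjugate q)
    {Ω : Set (Fin n → ℝ)} {R : Matrix (Fin m) (Fin n) ℝ} {η : ℕ → ℝ} {u : ℕ → (Fin n → ℝ) → ℝ}
    (f : Lp ℝ (ENNReal.ofReal p)
      ((volume.restrict Ω).prod (volume : Measure (UnitAddTorus (Fin m)))))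
    (h : ∀ g : Lp C(UnitAddTorus (Fin m), ℝ) (ENNReal.ofReal q) (volume.restrict Ω),
      Tendsto (fun k => ∫ x in Ω, u k x * g x (toTorus ((η k)⁻¹ • R.mulVec x))) atTop
        (𝓝 (∫ z, f z * g z.1 z.2 ∂(volume.restrict Ω).prod volume))) :
    WeakTwoScale q Ω R η u fun x y => f (x, toTorus y) := by
  intro φ hφ
  obtain ⟨g, hg⟩ := hφ.exists_lp hpq.symm.pos
  have := hpq.ennrealOfReal
  have := hpq.symm.ennrealOfReal
  have : Fact (1 ≤ ENNReal.ofReal q) := ⟨ENNReal.one_le_ofReal.2 hpq.symm.lt.le⟩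
  have hfg : Integrable (fun z => f z * g z.1 z.2) ((volume.restrict Ω).prod volume) :=
    (Lp.memLp f).integrable_mul
      ((memLp_congr_ae (coeFn_uncurryLp volume g)).1 (Lp.memLp (uncurryLp volume g)))
  have hlim : ∫ x in Ω, ∫ y in cube m, f (x, toTorus y) * φ x y =
      ∫ z, f z * g z.1 z.2 ∂(volume.restrict Ω).prod volume := by
    rw [← integral_comp_toTorus hfg]
    refine integral_congr_ae ?_
    filter_upwards [hg] with x hx
    simp only [hx]
  rw [hlim]
  refine (h g).congr fun k => integral_congr_ae ?_
  filter_upwards [hg] with x hx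
  rw [hx]

theorem stmt0_general {n m : ℕ} {p q : ℝ} (hpq : p.HolderConjugate q) {Ω : Set (Fin n → ℝ)}
    (hΩ : volume Ω ≠ ⊤) {R : Matrix (Fin m) (Fin n) ℝ} (hR : Irr R) {ε : ℕ → ℝ}
    (hε : Tendsto ε atTop (𝓝[≠] 0)) {u : ℕ → (Fin n → ℝ) → ℝ}
    (hmeas : ∀ k, AEMeasurable (u k) (volume.restrict Ω)) {C : ℝ}
    (hbdd : ∀ k, Integrable (fun x => |u k x| ^ p) (volume.restrict Ω) ∧
      ∫ x in Ω, |u k x| ^ p ≤ C) :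
    ∃ θ : ℕ → ℕ, StrictMono θ ∧ ∃ u₀ : (Fin n → ℝ) → (Fin m → ℝ) → ℝ,
      (∀ x, Zper (u₀ x)) ∧
      Integrable (fun z : (Fin n → ℝ) × (Fin m → ℝ) => |u₀ z.1 z.2| ^ p)
        ((volume.restrict Ω).prod (volume.restrict (cube m))) ∧
      WeakTwoScale q Ω R (ε ∘ θ) (u ∘ θ) u₀ := by
  have := hpq.ennrealOfReal
  have : Fact (1 ≤ ENNReal.ofReal p) := ⟨ENNReal.one_le_ofReal.2 hpq.lt.le⟩
  have : Fact (1 ≤ ENNReal.ofReal q) := ⟨ENNReal.one_le_ofReal.2 hpq.symm.lt.le⟩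
  have : IsFiniteMeasure (volume.restrict Ω) := ⟨by simpa using hΩ.lt_top⟩
  have hu (k : ℕ) := memLp_of_integrable_rpow hpq.pos (hmeas k) (hbdd k).1
  obtain ⟨θ, hθ, f, hf⟩ :=
    (hR.equidistributed hΩ (tendsto_inv₀_nhdsNE_zero.comp hε)).exists_subseq_tendsto_integral
      (q := ENNReal.ofReal q) ENNReal.ofReal_ne_top ENNReal.ofReal_ne_top
      (fun k => (hu k).toLp (u k)) _
      fun k => norm_toLp_le_of_integral_rpow_le hpq.pos (hu k) (hbdd k).2
  refine ⟨θ, hθ, fun x y => f (x, toTorus y), fun x => zper_comp_toTorus fun y => f (x, y),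
    integrable_rpow_comp_toTorus hpq.pos f, weakTwoScale_comp_toTorus hpq f fun g => ?_⟩
  refine (hf g).congr fun k => integral_congr_ae ?_
  filter_upwards [(hu (θ k)).coeFn_toLp] with x hx
  simp only [hx, Function.comp_apply]

/-- compactness for weak two-scale cut-and-projection convergence:
a bounded family in `L^p(Ω)` admits a vanishing subsequence of scales along which it
two-scale converges weakly to some `Y^m`-periodic `u₀ ∈ L^p(Ω × Y^m)`. -/
theorem stmt0 {n m : ℕ} (hnm : n < m) (p q : ℝ) (hp : 1 < p) (hpq : 1 / p + 1 / q = 1)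
    (Ω : Set (Fin n → ℝ)) (hΩo : IsOpen Ω) (hΩb : Bornology.IsBounded Ω)
    (R : Matrix (Fin m) (Fin n) ℝ) (hR : Irr R)
    (u : ℝ → (Fin n → ℝ) → ℝ)
    (hmeas : ∀ η ∈ Set.Ioo (0:ℝ) 1, AEMeasurable (u η) (volume.restrict Ω))
    (hbdd : ∃ C : ℝ, ∀ η ∈ Set.Ioo (0:ℝ) 1,
      (Integrable (fun x => |u η x| ^ p) (volume.restrict Ω)) ∧
      ∫ x in Ω, |u η x| ^ p ≤ C) :
    ∃ η : ℕ → ℝ, (∀ k, η k ∈ Set.Ioo (0:ℝ) 1) ∧ Tendsto η atTop (𝓝 0) ∧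
      ∃ u₀ : (Fin n → ℝ) → (Fin m → ℝ) → ℝ,
        (∀ x, Zper (u₀ x)) ∧
        Integrable (fun z : (Fin n → ℝ) × (Fin m → ℝ) => |u₀ z.1 z.2| ^ p)
          ((volume.restrict Ω).prod (volume.restrict (cube m))) ∧
        WeakTwoScale q Ω R η (fun k => u (η k)) u₀ := by
  have hpq' : p.HolderConjugate q := Real.holderConjugate_iff.2 ⟨hp, by simpa using hpq⟩
  obtain ⟨C, hC⟩ := hbdd
  obtain ⟨ε, -, hε, hlim⟩ := exists_seq_strictAnti_tendsto' (zero_lt_one (α := ℝ))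
  have hε₀ : Tendsto ε atTop (𝓝[≠] 0) :=
    tendsto_nhdsWithin_iff.2 ⟨hlim, .of_forall fun k => (hε k).1.ne'⟩
  obtain ⟨θ, hθ, u₀, hu₀⟩ := stmt0_general hpq' hΩb.measure_lt_top.ne hR hε₀
    (fun k => hmeas _ (hε k)) fun k => hC _ (hε k)
  exact ⟨ε ∘ θ, fun k => hε _, hlim.comp hθ.tendsto_atTop, u₀, hu₀⟩
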